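/- arXiv:1809.03832 — 3 statements merged into one kernel-verified Lean document; each statement's English description precedes it below -/
import Mathlib

section
/- Let g : ℝ^d → ℝ be three times continuously differentiable, let θ₀ ∈ ℝ^d, and let θ : ℝ → ℝ^d satisfy θ(0) = θ₀ and θ'(t) = −∇g(θ(t)) for all t in a neighbourhood of 0. Define the two-half-step approximation θ_{1/2}(η) = θ₀ − (η/2)∇g(θ₀) and θ̂₁(η) = θ_{1/2}(η) − (η/2)∇g(θ_{1/2}(η)). Then, as η → 0, θ(η) − θ̂₁(η) = (η²/4)·(D(∇g)(θ₀))(∇g(θ₀)) + O(η³). -/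
open Asymptotics Filter


theorem isBigO_of_fderiv_aux {E F : Type*} [NormedAddCommGroup E] [NormedSpace ℝ E]
    [NormedAddCommGroup F] [NormedSpace ℝ F] (f : E → F) (f' : E → E →L[ℝ] F) (a : E) (n : ℕ)
    (hf : ∀ᶠ x in nhds a, HasFDerivAt f (f' x) x)
    (hO : f' =O[nhds a] fun x => ‖x - a‖ ^ n) :
    (fun x => f x - f a) =O[nhds a] fun x => ‖x - a‖ ^ (n + 1) := by
  obtain ⟨C, hC⟩ := hO.bound
  obtain ⟨r, hr, hb⟩ := Metric.eventually_nhds_iff_ball.1 (hf.and hC)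
  refine IsBigO.of_bound C ?_
  filter_upwards [Metric.ball_mem_nhds a hr] with x hx
  have hsub : ∀ y ∈ Metric.closedBall a ‖x - a‖, y ∈ Metric.ball a r := by
    intro y hy
    rw [Metric.mem_closedBall] at hy
    rw [Metric.mem_ball] at hx ⊢
    rw [← dist_eq_norm] at hy
    linarith
  have hC0 : ∀ y ∈ Metric.closedBall a ‖x - a‖, ‖f' y‖ ≤ |C| * ‖x - a‖ ^ n := by
    intro y hy
    refine ((hb y (hsub y hy)).2).trans ?_
    rw [norm_pow, norm_norm]
    rw [Metric.mem_closedBall, dist_eq_norm] at hy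
    gcongr
    exact le_abs_self C
  have hC1 : ∀ y ∈ Metric.closedBall a ‖x - a‖, ‖f' y‖ ≤ C * ‖x - a‖ ^ n := by
    intro y hy
    rcases le_or_gt 0 C with h | h
    · simpa [abs_of_nonneg h] using hC0 y hy
    · by_cases hxa : x = a
      · subst hxa
        have : y = x := by simpa using hy
        subst this
        simpa using (hb y (hsub y hy)).2
      · have h1 := (hb x hx).2
        have h2 : 0 < ‖x - a‖ := norm_pos_iff.2 (sub_ne_zero.2 hxa)
        rw [norm_pow, norm_norm] at h1
        have := norm_nonneg (f' x)
        have h3 : 0 < ‖x - a‖ ^ n := by positivity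
        nlinarith
  have := (convex_closedBall a ‖x - a‖).norm_image_sub_le_of_norm_hasFDerivWithin_le
    (fun y hy => (hb y (hsub y hy)).1.hasFDerivWithinAt) hC1
    (Metric.mem_closedBall_self (norm_nonneg _)) (by simp [dist_eq_norm] : x ∈ _)
  rw [norm_pow, norm_norm, pow_succ, ← mul_assoc]
  exact this

theorem isBigO_of_deriv_aux {F : Type*} [NormedAddCommGroup F] [NormedSpace ℝ F]
    (f f' : ℝ → F) (n : ℕ) (h0 : f 0 = 0)
    (hf : ∀ᶠ x in nhds (0 : ℝ), HasDerivAt f (f' x) x)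
    (hO : f' =O[nhds 0] fun x : ℝ => x ^ n) :
    f =O[nhds 0] fun x : ℝ => x ^ (n + 1) := by
  have := isBigO_of_fderiv_aux f (fun x => ContinuousLinearMap.toSpanSingleton ℝ (f' x)) 0 n
    (hf.mono fun x hx => hx.hasFDerivAt) (by
      rw [← isBigO_norm_left]
      have h := hO.norm_left.norm_right
      simp only [norm_pow] at h
      simpa using h)
  rw [← isBigO_norm_right]
  simp only [norm_pow]
  simpa [h0] using this

theorem taylor_two_aux {E F : Type*} [NormedAddCommGroup E] [NormedSpace ℝ E]
    [NormedAddCommGroup F] [NormedSpace ℝ F] (f : E → F) (hf : ContDiff ℝ 2 f) (a : E) :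
    (fun x => f x - f a - fderiv ℝ f a (x - a)) =O[nhds a] fun x => ‖x - a‖ ^ 2 := by
  have hd : Differentiable ℝ f := hf.differentiable (by norm_num)
  have h1 : ContDiff ℝ 1 (fderiv ℝ f) := hf.fderiv_right (by norm_num)
  have h2 := ((h1.differentiable (by norm_num)) a).hasFDerivAt.isBigO_sub
  have := isBigO_of_fderiv_aux (fun x => f x - fderiv ℝ f a x)
    (fun x => fderiv ℝ f x - fderiv ℝ f a) a 1
    (Eventually.of_forall fun x => (hd x).hasFDerivAt.sub (fderiv ℝ f a).hasFDerivAt)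
    (by simpa using h2.norm_right)
  refine this.congr_left fun x => ?_
  rw [map_sub]; abel

/-- The local error of two explicit Euler half-steps of size `η/2` for the gradient flow
`θ' = -∇g(θ)` satisfies `θ(η) - θ̂₁(η) = (η²/4)·D(∇g)(θ₀)(∇g(θ₀)) + O(η³)` as `η → 0`. -/
theorem two_half_steps_local_error {d : ℕ} (g : EuclideanSpace ℝ (Fin d) → ℝ)
    (hg : ContDiff ℝ 3 g) (θ₀ : EuclideanSpace ℝ (Fin d))
    (θ : ℝ → EuclideanSpace ℝ (Fin d)) (hθ0 : θ 0 = θ₀)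
    (hθ : ∀ᶠ t in nhds (0 : ℝ), HasDerivAt θ (-(gradient g (θ t))) t) :
    (fun η : ℝ => θ η -
        ((θ₀ - (η / 2) • gradient g θ₀)
          - (η / 2) • gradient g (θ₀ - (η / 2) • gradient g θ₀))
        - (η ^ 2 / 4) • (fderiv ℝ (gradient g) θ₀ (gradient g θ₀)))
      =O[nhds 0] fun η : ℝ => η ^ 3 := by
  set F := gradient g with hF
  have hFC : ContDiff ℝ 2 F := by
    have h1 : ContDiff ℝ 2 (fderiv ℝ g) := hg.fderiv_right (by norm_num)
    exact (InnerProductSpace.toDual ℝ (EuclideanSpace ℝ (Fin d))).symm.contDiff.comp h1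
  set G := F θ₀ with hG
  set L := fderiv ℝ F θ₀ with hL
  have hT := taylor_two_aux F hFC θ₀
  have hθd := hθ.self_of_nhds
  have hcont : Tendsto θ (nhds 0) (nhds θ₀) := by
    rw [← hθ0]; exact hθd.continuousAt
  have hA : (fun η => θ η - θ₀) =O[nhds 0] fun η : ℝ => η := by
    simpa [hθ0] using hθd.isBigO_sub
  have hFθ : (fun η => F (θ η) - G - L (θ η - θ₀)) =O[nhds 0] fun η : ℝ => η ^ 2 :=
    (hT.comp_tendsto hcont).trans (hA.norm_left.pow 2)
  have hsq : (fun η : ℝ => η ^ 2) =O[nhds 0] fun η : ℝ => η ^ 1 :=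
    IsBigO.of_bound 1 (by
      filter_upwards [Metric.ball_mem_nhds (0:ℝ) one_pos] with x hx
      have hx1 : |x| < 1 := by simpa using hx
      rw [norm_pow, norm_pow, Real.norm_eq_abs]
      nlinarith [abs_nonneg x])
  have hLA : (fun η => L (θ η - θ₀)) =O[nhds 0] fun η : ℝ => η ^ 1 := by
    simpa using (L.isBigO_comp _ _).trans hA
  have hB : (fun η : ℝ => θ η - θ₀ + η • G) =O[nhds 0] fun η : ℝ => η ^ 2 := by
    refine isBigO_of_deriv_aux _ (fun η => -F (θ η) + G) 1 (by simp [hθ0]) ?_ ?_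
    · filter_upwards [hθ] with t ht
      have h := (ht.sub_const θ₀).add ((hasDerivAt_id t).smul_const G)
      rw [one_smul] at h
      exact h
    · refine ((hFθ.trans hsq).add hLA).neg_left.congr_left fun η => ?_
      abel
  have hC : (fun η : ℝ => θ η - θ₀ + η • G - (η ^ 2 / 2) • L G)
      =O[nhds 0] fun η : ℝ => η ^ 3 := by
    refine isBigO_of_deriv_aux _ (fun η => -F (θ η) + G - η • L G) 2 (by simp [hθ0]) ?_ ?_
    · filter_upwards [hθ] with t ht
      have h2 : HasDerivAt (fun η : ℝ => η ^ 2 / 2) t t := by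
        have := (hasDerivAt_pow 2 t).div_const 2
        simpa using this
      have h := ((ht.sub_const θ₀).add ((hasDerivAt_id t).smul_const G)).sub
        (h2.smul_const (L G))
      rw [one_smul] at h
      exact h
    · refine (hFθ.add ((L.isBigO_comp _ _).trans hB)).neg_left.congr_left fun η => ?_
      simp only [map_add, map_smul]
      abel
  have hy : Tendsto (fun η : ℝ => θ₀ - (η / 2) • G) (nhds 0) (nhds θ₀) := by
    have : Continuous (fun η : ℝ => θ₀ - (η / 2) • G) := by fun_prop
    simpa using this.tendsto 0
  have hyO : (fun η : ℝ => (θ₀ - (η / 2) • G) - θ₀) =O[nhds 0] fun η : ℝ => η := by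
    refine IsBigO.of_bound (‖G‖ / 2) (Eventually.of_forall fun η => ?_)
    simp [norm_smul]
    apply le_of_eq; ring
  have hD : (fun η : ℝ => F (θ₀ - (η / 2) • G) - G - L ((θ₀ - (η / 2) • G) - θ₀))
      =O[nhds 0] fun η : ℝ => η ^ 2 :=
    (hT.comp_tendsto hy).trans (hyO.norm_left.pow 2)
  have hhalf : (fun η : ℝ => η / 2) =O[nhds 0] fun η : ℝ => η := by
    refine IsBigO.of_bound (1 / 2) (Eventually.of_forall fun η => ?_)
    simp
    apply le_of_eq; ring
  have hE : (fun η : ℝ => (η / 2) • (F (θ₀ - (η / 2) • G) - G - L ((θ₀ - (η / 2) • G) - θ₀)))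
      =O[nhds 0] fun η : ℝ => η ^ 3 :=
    (hhalf.smul hD).congr_right fun η => by simp only [smul_eq_mul]; ring
  refine (hC.add hE).congr_left fun η => ?_
  rw [sub_sub_cancel_left, map_neg, map_smul]
  module
end

section
/- Let μ and ν be probability measures on a measurable space Ω with μ absolutely continuous with respect to ν, and let λ > 0 and ε > 0. Set α = log ∫ (dμ/dν)^λ dμ, and assume this integral is finite. Then for every measurable set E ⊆ Ω, μ(E) ≤ e^ε · ν(E) + exp(α − λ·ε). -/
open MeasureTheory Real

/-- Tail bound from the moments accountant: if `α = log ∫ (dμ/dν)^λ dμ`, then for every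
measurable set `E`, `μ(E) ≤ e^ε ν(E) + exp(α - λε)`. -/
theorem dp_from_moment_bound {Ω : Type*} [MeasurableSpace Ω]
    (μ ν : Measure Ω) [IsProbabilityMeasure μ] [IsProbabilityMeasure ν]
    (hac : μ ≪ ν) (lam ε : ℝ) (hlam : 0 < lam) (hε : 0 < ε)
    (hint : Integrable (fun o => (μ.rnDeriv ν o).toReal ^ lam) μ) :
    ∀ E : Set Ω, MeasurableSet E →
      (μ E).toReal ≤ Real.exp ε * (ν E).toReal +
        Real.exp (Real.log (∫ o, (μ.rnDeriv ν o).toReal ^ lam ∂μ) - lam * ε) := by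
  intro E hE
  set f : Ω → ℝ := fun o => (μ.rnDeriv ν o).toReal with hf
  have hfm : Measurable f := (Measure.measurable_rnDeriv μ ν).ennreal_toReal
  set I : ℝ := ∫ o, (μ.rnDeriv ν o).toReal ^ lam ∂μ with hI
  set B : Set Ω := {o | Real.exp ε ≤ f o} with hB
  have hBm : MeasurableSet B := measurableSet_le measurable_const hfm
  have h1 : μ.real (E \ B) ≤ Real.exp ε * ν.real E := by
    rw [← Measure.setIntegral_toReal_rnDeriv hac]
    calc ∫ x in E \ B, (μ.rnDeriv ν x).toReal ∂ν ≤ ∫ x in E \ B, Real.exp ε ∂ν := by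
          apply setIntegral_mono_on
          · exact Measure.integrable_toReal_rnDeriv.integrableOn
          · exact integrableOn_const (measure_ne_top _ _)
          · exact hE.diff hBm
          · intro x hx
            exact (not_le.mp hx.2).le
      _ = Real.exp ε * ν.real (E \ B) := by
          rw [setIntegral_const, smul_eq_mul, mul_comm]
      _ ≤ Real.exp ε * ν.real E := by
          exact mul_le_mul_of_nonneg_left
            (measureReal_mono Set.sdiff_subset (measure_ne_top _ _)) (Real.exp_pos _).le
  have h2 : Real.exp (lam * ε) * μ.real B ≤ I := by
    have hmk := mul_meas_ge_le_integral_of_nonneg (μ := μ)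
      (f := fun o => (μ.rnDeriv ν o).toReal ^ lam)
      (Filter.Eventually.of_forall fun o => by positivity) hint (Real.exp (lam * ε))
    refine le_trans ?_ hmk
    refine mul_le_mul_of_nonneg_left
      (measureReal_mono ?_ (measure_ne_top _ _)) (Real.exp_pos _).le
    intro o ho
    have ho' : Real.exp ε ≤ (μ.rnDeriv ν o).toReal := ho
    change Real.exp (lam * ε) ≤ (μ.rnDeriv ν o).toReal ^ lam
    rw [mul_comm, Real.exp_mul]
    exact Real.rpow_le_rpow (Real.exp_pos _).le ho' hlam.le
  have h3 : μ.real B ≤ Real.exp (Real.log I - lam * ε) := by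
    rw [Real.exp_sub, le_div_iff₀ (Real.exp_pos _), mul_comm]
    exact h2.trans (Real.le_exp_log I)
  have h4 : μ.real E ≤ μ.real (E \ B) + μ.real B := by
    refine le_trans (measureReal_mono ?_ (measure_ne_top _ _)) (measureReal_union_le _ _)
    intro x hx
    by_cases hxB : x ∈ B
    · exact Or.inr hxB
    · exact Or.inl ⟨hx, hxB⟩
  change μ.real E ≤ Real.exp ε * ν.real E + Real.exp (Real.log I - lam * ε)
  linarith
end

section
/- Let m, m' ∈ ℝ, σ > 0, and λ ≥ 0. Let μ be the Gaussian measure on ℝ with mean m and variance σ², and let ν be the Gaussian measure on ℝ with mean m' and variance σ². Then ∫ (dμ/dν)^λ dμ = exp(λ(λ+1)(m − m')² / (2σ²)); equivalently, the λ-th privacy-loss moment of μ against ν equals λ(λ+1)(m − m')²/(2σ²). -/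
open MeasureTheory ProbabilityTheory Real

/-- The λ-th privacy-loss moment of a Gaussian with mean `m` and variance `σ²` against a
Gaussian with mean `m'` and variance `σ²`: `∫ (dμ/dν)^λ dμ = exp(λ(λ+1)(m-m')²/(2σ²))`. -/
theorem gaussian_privacy_loss_moment (m m' σ : ℝ) (hσ : 0 < σ) (lam : ℝ) (hlam : 0 ≤ lam) :
    ∫ x, ((gaussianReal m ⟨σ ^ 2, sq_nonneg σ⟩).rnDeriv
          (gaussianReal m' ⟨σ ^ 2, sq_nonneg σ⟩) x).toReal ^ lam
        ∂(gaussianReal m ⟨σ ^ 2, sq_nonneg σ⟩)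
      = Real.exp (lam * (lam + 1) * (m - m') ^ 2 / (2 * σ ^ 2)) := by
  set v : NNReal := ⟨σ ^ 2, sq_nonneg σ⟩ with hvdef
  have hvr : (v : ℝ) = σ ^ 2 := rfl
  have hσ0 : σ ≠ 0 := hσ.ne'
  have hv : v ≠ 0 := by
    intro h
    have h2 : (v : ℝ) = 0 := by rw [h]; rfl
    rw [hvr] at h2
    exact hσ0 (by simpa using h2)
  let g : ℝ → ℝ := fun x => (m - m') * (2 * x - m - m') / (2 * σ ^ 2)
  have hgm : Measurable g := by fun_prop
  let f : ℝ → ENNReal := fun x => ENNReal.ofReal (Real.exp (g x))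
  have hf : Measurable f := by fun_prop
  have hμ : gaussianReal m v = (gaussianReal m' v).withDensity f := by
    rw [gaussianReal_of_var_ne_zero m hv, gaussianReal_of_var_ne_zero m' hv,
      ← withDensity_mul _ (measurable_gaussianPDF m' v) hf]
    congr 1
    ext1 x
    simp only [Pi.mul_apply, gaussianPDF, f]
    rw [← ENNReal.ofReal_mul (gaussianPDFReal_nonneg _ _ _)]
    congr 1
    simp only [gaussianPDFReal, hvr, g]
    rw [mul_assoc (_⁻¹), ← Real.exp_add]
    congr 2
    field_simp
    ring
  have hac : gaussianReal m v ≪ gaussianReal m' v := by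
    rw [hμ]; exact withDensity_absolutelyContinuous _ _
  have hrn : (gaussianReal m v).rnDeriv (gaussianReal m' v) =ᵐ[gaussianReal m' v] f := by
    rw [hμ]; exact Measure.rnDeriv_withDensity _ hf
  have hrn2 : (gaussianReal m v).rnDeriv (gaussianReal m' v) =ᵐ[gaussianReal m v] f :=
    hac.ae_eq hrn
  have hmgf : ∫ x, Real.exp (lam * (m - m') / σ ^ 2 * x) ∂(gaussianReal m v)
      = Real.exp (m * (lam * (m - m') / σ ^ 2) + v * (lam * (m - m') / σ ^ 2) ^ 2 / 2) := by
    have := congrFun (mgf_id_gaussianReal (μ := m) (v := v)) (lam * (m - m') / σ ^ 2)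
    simpa [mgf] using this
  calc _ = ∫ x, Real.exp (-(lam * (m - m') * (m + m') / (2 * σ ^ 2))) *
        Real.exp (lam * (m - m') / σ ^ 2 * x) ∂(gaussianReal m v) := by
        apply integral_congr_ae
        filter_upwards [hrn2] with x hx
        rw [hx]
        simp only [f, g]
        rw [ENNReal.toReal_ofReal (Real.exp_pos _).le, ← Real.exp_mul, ← Real.exp_add]
        congr 1
        field_simp
        ring
    _ = _ := by
        rw [integral_const_mul, hmgf, ← Real.exp_add, hvr]
        congr 1
        field_simp
        ring
end
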